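/- arXiv:math/0409468 — 3 statements merged into one kernel-verified Lean document; each statement's English description precedes it below -/
import Mathlib

section
/- For every nonnegative integer s, the number of magic squares of order 3 with magic number 3s equals 2s² − (20/3)s + 1 − (−1)^s + (8/3)(s mod 3); equivalently, three times this number equals 6s² − 20s + 3 − 3·(−1)^s + 8·(s mod 3). -/
open Matrix Finset

/-- `IsMagic M m` : every row sum, column sum, and both diagonal sums of the
3×3 matrix `M` of nonnegative integers equal `m`, and all entries are distinct. -/
def IsMagic (M : Matrix (Fin 3) (Fin 3) ℕ) (m : ℕ) : Prop :=
  (Function.Injective fun p : Fin 3 × Fin 3 => M p.1 p.2) ∧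
  (∀ i, ∑ j, M i j = m) ∧
  (∀ j, ∑ i, M i j = m) ∧
  (∑ i, M i i = m) ∧
  (∑ i, M i i.rev = m)

/-- A magic square of order 3. -/
def IsMagicSquare (M : Matrix (Fin 3) (Fin 3) ℕ) : Prop := ∃ m, IsMagic M m


/-!
A square with line sums `3s` has centre `s`, and it is then determined by the deviations `a` and
`b` of its two upper corners from `s`. Its nine entries are `s + x a + y b` with
`x, y ∈ {-1, 0, 1}`. They are nonnegative exactly when `|a| + |b| ≤ s`, and two of them coincide
exactly when `(a, b)` lies on one of eight lines through the origin. So one counts the lattice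
points of an `ℓ¹` ball, which are `2s(s + 1) + 1` in number, and discards the origin and the
remaining points of these lines: a line with primitive direction `v` contributes `2⌊s / ‖v‖₁⌋`.
The eight norms are `1, 1, 2, 2, 3, 3, 3, 3`; hence the terms `(-1)^s` and `s mod 3`.
-/

theorem sum_range_two_mul_add_one (n : ℕ) : ∑ i ∈ range n, (2 * i + 1) = n ^ 2 := by
  induction n with
  | zero => rfl
  | succ n ih => rw [sum_range_succ, ih]; ring

theorem four_mul_div_two (s : ℕ) : 4 * ((s / 2 : ℕ) : ℤ) = 2 * s - 1 + (-1) ^ s := by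
  obtain hs | hs := s.even_or_odd
  · have := Nat.even_iff.mp hs
    rw [hs.neg_one_pow]
    omega
  · have := Nat.odd_iff.mp hs
    rw [hs.neg_one_pow]
    omega

theorem exists_smul_eq_of_parallel {R : Type*} [CommRing R] {v p : R × R}
    (hv : IsCoprime v.1 v.2) (h : v.2 * p.1 = v.1 * p.2) : ∃ t : R, t • v = p := by
  obtain ⟨x, y, hxy⟩ := hv
  refine ⟨x * p.1 + y * p.2, Prod.ext ?_ ?_⟩
  · simp only [Prod.smul_fst, smul_eq_mul]
    linear_combination p.1 * hxy - y * h
  · simp only [Prod.smul_snd, smul_eq_mul]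
    linear_combination p.2 * hxy + x * h

theorem eq_zero_of_parallel_of_parallel {R : Type*} [CommRing R] [NoZeroDivisors R] {v w p : R × R}
    (hvw : v.2 * w.1 ≠ v.1 * w.2) (hv : v.2 * p.1 = v.1 * p.2) (hw : w.2 * p.1 = w.1 * p.2) :
    p = 0 := by
  have hdet : v.2 * w.1 - v.1 * w.2 ≠ 0 := sub_ne_zero.mpr hvw
  refine Prod.ext (mul_left_cancel₀ hdet ?_) (mul_left_cancel₀ hdet ?_)
  · simp only [Prod.fst_zero]
    linear_combination w.1 * hv - v.1 * hw
  · simp only [Prod.snd_zero]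
    linear_combination w.2 * hv - v.2 * hw

/-- All rows, columns and both diagonals of `M` have sum `m`; this is `IsMagic` without the
distinctness of the entries, over an arbitrary additive monoid so that integer matrices are
covered. -/
def HasMagicSums {G : Type*} [AddCommMonoid G] (M : Matrix (Fin 3) (Fin 3) G) (m : G) : Prop :=
  (∀ i, ∑ j, M i j = m) ∧ (∀ j, ∑ i, M i j = m) ∧ ∑ i, M i i = m ∧ ∑ i, M i i.rev = m

theorem hasMagicSums_map_iff {G H : Type*} [AddCommMonoid G] [AddCommMonoid H] {f : G →+ H}
    (hf : Function.Injective f) {M : Matrix (Fin 3) (Fin 3) G} {m : G} :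
    HasMagicSums (M.map f) (f m) ↔ HasMagicSums M m := by
  simp only [HasMagicSums, Matrix.map_apply, ← map_sum, hf.eq_iff]

theorem hasMagicSums_iff {G : Type*} [AddCommMonoid G] {M : Matrix (Fin 3) (Fin 3) G} {m : G} :
    HasMagicSums M m ↔
      (M 0 0 + M 0 1 + M 0 2 = m ∧ M 1 0 + M 1 1 + M 1 2 = m ∧ M 2 0 + M 2 1 + M 2 2 = m) ∧
      (M 0 0 + M 1 0 + M 2 0 = m ∧ M 0 1 + M 1 1 + M 2 1 = m ∧ M 0 2 + M 1 2 + M 2 2 = m) ∧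
      M 0 0 + M 1 1 + M 2 2 = m ∧ M 0 2 + M 1 1 + M 2 0 = m := by
  simp [HasMagicSums, Fin.forall_fin_succ, Fin.sum_univ_three, Fin.rev]

section LucasSquare

variable {G : Type*} [AddCommGroup G]

/-- Lucas' normal form of a square with centre `c` and line sums `3 • c`, where `a` and `b` are
the deviations of the two upper corners from the centre. -/
def lucasSquare (c a b : G) : Matrix (Fin 3) (Fin 3) G :=
  !![c + a, c - a - b, c + b;
     c - a + b, c, c + a - b;
     c - b, c + a + b, c - a]

theorem hasMagicSums_lucasSquare (c a b : G) : HasMagicSums (lucasSquare c a b) (3 • c) := by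
  rw [hasMagicSums_iff]
  simp only [lucasSquare, of_apply, cons_val', cons_val_zero, cons_val_fin_one, cons_val_one,
    Matrix.cons_val]
  refine ⟨⟨?_, ?_, ?_⟩, ⟨?_, ?_, ?_⟩, ?_, ?_⟩ <;> abel

theorem HasMagicSums.eq_lucasSquare [IsAddTorsionFree G] {M : Matrix (Fin 3) (Fin 3) G} {c : G}
    (h : HasMagicSums M (3 • c)) : M = lucasSquare c (M 0 0 - c) (M 0 2 - c) := by
  obtain ⟨⟨row₀, row₁, row₂⟩, ⟨col₀, col₁, col₂⟩, diag, antidiag⟩ := hasMagicSums_iff.mp h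
  -- The middle row and the two diagonals cover the left and right columns once and the centre
  -- three times.
  have centre : M 1 1 = c := by
    refine nsmul_right_injective (n := 3) three_ne_zero ?_
    dsimp only
    linear_combination (norm := module) row₁ + diag + antidiag - col₀ - col₂
  ext i j
  fin_cases i <;> fin_cases j <;> simp only [lucasSquare, of_apply, cons_val',
    cons_val_zero, cons_val_fin_one, cons_val_one, Matrix.cons_val, Fin.zero_eta, Fin.mk_one,
    Fin.reduceFinMk, centre] <;> grind

theorem lucasSquare_nonneg_iff [LinearOrder G] [IsOrderedAddMonoid G] {c a b : G} :
    (∀ i j, 0 ≤ lucasSquare c a b i j) ↔ |a| + |b| ≤ c := by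
  -- The corner entries and the centre are half-sums of the edge entries, so only the edge entries
  -- matter.
  have edges : |a| + |b| ≤ c ↔ a + b ≤ c ∧ a - b ≤ c ∧ b - a ≤ c ∧ -a - b ≤ c := by
    cases abs_cases a <;> cases abs_cases b <;> grind
  simp only [edges, lucasSquare, of_apply, cons_val', cons_val_fin_one, Fin.forall_fin_succ,
    cons_val_zero, cons_val_succ, forall_const]
  grind

/-- The pairs `(x, y)` such that the corresponding entry of `lucasSquare c a b` is
`c + x • a + y • b`. -/
def lucasCoeff : Matrix (Fin 3) (Fin 3) (ℤ × ℤ) :=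
  !![(1, 0), (-1, -1), (0, 1);
     (-1, 1), (0, 0), (1, -1);
     (0, -1), (1, 1), (-1, 0)]

theorem lucasSquare_apply (c a b : G) (i j : Fin 3) :
    lucasSquare c a b i j = c + (lucasCoeff i j).1 • a + (lucasCoeff i j).2 • b := by
  fin_cases i <;> fin_cases j <;> simp only [lucasSquare, lucasCoeff, of_apply, cons_val',
    cons_val_zero, cons_val_fin_one, cons_val_one, Matrix.cons_val, Fin.zero_eta, Fin.mk_one,
    Fin.reduceFinMk] <;> module

/-- Directions of the lines in the `(a, b)`-plane on which two entries of `lucasSquare c a b`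
coincide, one primitive vector for each line. -/
def coincidenceDirections : Finset (ℤ × ℤ) :=
  {(1, 0), (0, 1), (1, 1), (1, -1), (2, 1), (2, -1), (1, 2), (1, -2)}

theorem exists_lucasCoeff_sub_eq : ∀ p q : Fin 3 × Fin 3, p ≠ q →
    ∃ v ∈ coincidenceDirections, ∃ k ∈ ({1, -1, 2, -2} : Finset ℤ),
      lucasCoeff p.1 p.2 - lucasCoeff q.1 q.2 = k • (v.2, -v.1) := by
  decide

theorem exists_lucasCoeff_sub_eq_of_mem : ∀ v ∈ coincidenceDirections,
    ∃ p q : Fin 3 × Fin 3, p ≠ q ∧ lucasCoeff p.1 p.2 - lucasCoeff q.1 q.2 = (v.2, -v.1) := by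
  decide

theorem lucasSquare_eq_iff_of_lucasCoeff_sub_eq [IsAddTorsionFree G] {c a b : G}
    {p q : Fin 3 × Fin 3} {v : ℤ × ℤ} {k : ℤ} (hk : k ≠ 0)
    (h : lucasCoeff p.1 p.2 - lucasCoeff q.1 q.2 = k • (v.2, -v.1)) :
    lucasSquare c a b p.1 p.2 = lucasSquare c a b q.1 q.2 ↔ v.2 • a = v.1 • b := by
  have difference : lucasSquare c a b p.1 p.2 - lucasSquare c a b q.1 q.2
      = k • (v.2 • a - v.1 • b) := by
    rw [Prod.ext_iff] at h
    simp only [Prod.fst_sub, Prod.snd_sub, Prod.smul_mk, smul_eq_mul] at h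
    rw [lucasSquare_apply, lucasSquare_apply, sub_eq_iff_eq_add.mp h.1, sub_eq_iff_eq_add.mp h.2]
    module
  rw [← sub_eq_zero, difference, smul_eq_zero_iff_right hk, sub_eq_zero]

theorem lucasSquare_injective_iff [IsAddTorsionFree G] {c a b : G} :
    (Function.Injective fun p : Fin 3 × Fin 3 ↦ lucasSquare c a b p.1 p.2) ↔
      ∀ v ∈ coincidenceDirections, v.2 • a ≠ v.1 • b := by
  constructor
  · intro inj v hv coincide
    obtain ⟨p, q, hpq, h⟩ := exists_lucasCoeff_sub_eq_of_mem v hv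
    rw [← one_zsmul (v.2, -v.1)] at h
    exact hpq (inj ((lucasSquare_eq_iff_of_lucasCoeff_sub_eq one_ne_zero h).mpr coincide))
  · intro off p q hpq
    by_contra hne
    obtain ⟨v, hv, k, hk, h⟩ := exists_lucasCoeff_sub_eq p q hne
    have hk0 : k ≠ 0 := by rintro rfl; simp at hk
    exact off v hv ((lucasSquare_eq_iff_of_lucasCoeff_sub_eq hk0 h).mp hpq)

end LucasSquare

/-- The `ℓ¹` norm of a lattice point. -/
def l1Norm (p : ℤ × ℤ) : ℕ := p.1.natAbs + p.2.natAbs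

theorem natCast_l1Norm (p : ℤ × ℤ) : (l1Norm p : ℤ) = |p.1| + |p.2| := by
  simp [l1Norm]

theorem l1Norm_smul (t : ℤ) (p : ℤ × ℤ) : l1Norm (t • p) = t.natAbs * l1Norm p := by
  simp [l1Norm, Int.natAbs_mul, mul_add]

/-- The lattice points of `ℓ¹` norm at most `n`. -/
noncomputable def l1Ball (n : ℕ) : Finset (ℤ × ℤ) :=
  {p ∈ Icc (-n : ℤ) n ×ˢ Icc (-n : ℤ) n | l1Norm p ≤ n}

theorem mem_l1Ball {n : ℕ} {p : ℤ × ℤ} : p ∈ l1Ball n ↔ l1Norm p ≤ n := by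
  rw [l1Ball, mem_filter, mem_product, mem_Icc, mem_Icc, l1Norm]
  omega

theorem card_l1Ball_column {n : ℕ} {x : ℤ} (hx : x.natAbs ≤ n) :
    #{p ∈ l1Ball n | p.1 = x} = 2 * (n - x.natAbs) + 1 := by
  have column : {p ∈ l1Ball n | p.1 = x} =
      {x} ×ˢ Icc (-(n - x.natAbs : ℕ) : ℤ) (n - x.natAbs : ℕ) := by
    ext ⟨y, z⟩
    simp only [mem_filter, mem_l1Ball, l1Norm, mem_product, mem_singleton, mem_Icc]
    omega
  rw [column, card_product, card_singleton, Int.card_Icc]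
  omega

theorem card_l1Ball (n : ℕ) : #(l1Ball n) = 2 * n * (n + 1) + 1 := by
  have columns : #(l1Ball n) = ∑ x ∈ Icc (-n : ℤ) n, (2 * (n - x.natAbs) + 1) := by
    have maps : Set.MapsTo Prod.fst (l1Ball n : Set (ℤ × ℤ)) (Icc (-n : ℤ) n) :=
      fun p hp ↦ (mem_product.mp (mem_filter.mp hp).1).1
    rw [card_eq_sum_card_fiberwise maps]
    exact sum_congr rfl fun x hx ↦ card_l1Ball_column (by rw [mem_Icc] at hx; omega)
  have half : ∑ i ∈ range (n + 1), (2 * (n - i) + 1) = (n + 1) ^ 2 :=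
    (sum_range_reflect (fun i ↦ 2 * i + 1) (n + 1)).trans (sum_range_two_mul_add_one (n + 1))
  have symmetric := sum_Icc_of_even_eq_range
    (f := fun x : ℤ ↦ ((2 * (n - x.natAbs) + 1 : ℕ) : ℤ)) (fun x ↦ by simp) n
  simp only [Int.natAbs_natCast, Int.natAbs_zero, Nat.sub_zero, ← Nat.cast_sum, ← columns,
    half] at symmetric
  zify
  rw [symmetric]
  push_cast
  ring

/-- The nonzero points of `l1Ball n` on the line through the origin in direction `v`. -/
noncomputable def l1BallLine (n : ℕ) (v : ℤ × ℤ) : Finset (ℤ × ℤ) :=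
  {p ∈ l1Ball n | p ≠ 0 ∧ v.2 * p.1 = v.1 * p.2}

theorem l1Norm_pos_of_isCoprime {v : ℤ × ℤ} (hv : IsCoprime v.1 v.2) : 0 < l1Norm v := by
  have := hv.ne_zero_or_ne_zero
  unfold l1Norm
  omega

theorem card_l1BallLine {v : ℤ × ℤ} (hv : IsCoprime v.1 v.2) (n : ℕ) :
    #(l1BallLine n v) = 2 * (n / l1Norm v) := by
  have hpos := l1Norm_pos_of_isCoprime hv
  have hv0 : v ≠ 0 := by rintro rfl; simp [l1Norm] at hpos
  set k := n / l1Norm v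
  have multiples : l1BallLine n v = ((Icc (-k : ℤ) k).erase 0).image (· • v) := by
    ext p
    simp only [l1BallLine, mem_filter, mem_l1Ball, mem_image, mem_erase, mem_Icc]
    have smul_mem (t : ℤ) : l1Norm (t • v) ≤ n ↔ -k ≤ t ∧ t ≤ k := by
      rw [l1Norm_smul, ← Nat.le_div_iff_mul_le hpos]
      omega
    constructor
    · rintro ⟨hn, hp0, hp⟩
      obtain ⟨t, rfl⟩ := exists_smul_eq_of_parallel hv hp
      exact ⟨t, ⟨left_ne_zero_of_smul hp0, (smul_mem t).mp hn⟩, rfl⟩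
    · rintro ⟨t, ⟨ht0, ht⟩, rfl⟩
      refine ⟨(smul_mem t).mpr ht, smul_ne_zero ht0 hv0, ?_⟩
      simp only [Prod.smul_fst, Prod.smul_snd, smul_eq_mul]
      ring
  rw [multiples, card_image_of_injective _ (smul_left_injective ℤ hv0),
    card_erase_of_mem (by simp), Int.card_Icc]
  omega

/-- The points of `l1Ball n` on none of the lines through the origin with direction in `D`. -/
noncomputable def l1BallOffLines (n : ℕ) (D : Finset (ℤ × ℤ)) : Finset (ℤ × ℤ) :=
  {p ∈ l1Ball n | ∀ v ∈ D, v.2 * p.1 ≠ v.1 * p.2}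

theorem card_l1BallOffLines {D : Finset (ℤ × ℤ)} (hD : D.Nonempty)
    (primitive : ∀ v ∈ D, IsCoprime v.1 v.2)
    (nonparallel : (D : Set (ℤ × ℤ)).Pairwise fun v w ↦ v.2 * w.1 ≠ v.1 * w.2) (n : ℕ) :
    #(l1BallOffLines n D) + ∑ v ∈ D, 2 * (n / l1Norm v) = 2 * n * (n + 1) := by
  have on_lines : {p ∈ l1Ball n | ¬ ∀ v ∈ D, v.2 * p.1 ≠ v.1 * p.2} =
      insert 0 (D.biUnion (l1BallLine n)) := by
    ext p
    by_cases hp : p = 0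
    · simpa [hp, mem_l1Ball, l1Norm, Finset.Nonempty] using hD
    · simp only [l1BallLine, mem_filter, mem_insert, mem_biUnion, hp, false_or]
      grind
  have zero_notMem : (0 : ℤ × ℤ) ∉ D.biUnion (l1BallLine n) := by simp [l1BallLine]
  have disjoint_lines : (D : Set (ℤ × ℤ)).PairwiseDisjoint (l1BallLine n) := by
    intro v hv w hw hvw
    refine disjoint_left.mpr fun p hpv hpw ↦ ?_
    simp only [l1BallLine, mem_filter] at hpv hpw
    exact hpv.2.1 (eq_zero_of_parallel_of_parallel (nonparallel hv hw hvw) hpv.2.2 hpw.2.2)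
  have total := card_filter_add_card_filter_not (s := l1Ball n)
    fun p ↦ ∀ v ∈ D, v.2 * p.1 ≠ v.1 * p.2
  rw [on_lines, card_insert_of_notMem zero_notMem, card_biUnion disjoint_lines,
    sum_congr rfl fun v hv ↦ card_l1BallLine (primitive v hv) n, card_l1Ball] at total
  rw [l1BallOffLines]
  omega

theorem card_l1BallOffLines_coincidenceDirections (n : ℕ) :
    #(l1BallOffLines n coincidenceDirections) + (4 * n + 4 * (n / 2) + 8 * (n / 3)) =
      2 * n * (n + 1) := by
  rw [← card_l1BallOffLines (D := coincidenceDirections) (by decide)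
    (by simp only [Int.isCoprime_iff_gcd_eq_one]; decide)
    (by rw [Set.Pairwise]; simp only [mem_coe]; decide), Nat.add_left_cancel_iff]
  calc 4 * n + 4 * (n / 2) + 8 * (n / 3)
      = 2 * (n / 1) + (2 * (n / 1) + (2 * (n / 2) + (2 * (n / 2) +
          (2 * (n / 3) + (2 * (n / 3) + (2 * (n / 3) + 2 * (n / 3))))))) := by
        rw [Nat.div_one]; ring
    _ = ∑ v ∈ coincidenceDirections, 2 * (n / l1Norm v) := rfl

section IsMagic

variable {M : Matrix (Fin 3) (Fin 3) ℕ} {s : ℕ}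

theorem isMagic_iff_map_natCast {m : ℕ} :
    IsMagic M m ↔ (Function.Injective fun p : Fin 3 × Fin 3 ↦ M.map ((↑) : ℕ → ℤ) p.1 p.2) ∧
      HasMagicSums (M.map ((↑) : ℕ → ℤ)) m :=
  and_congr (Nat.cast_injective.of_comp_iff _).symm
    (hasMagicSums_map_iff (f := Nat.castAddMonoidHom ℤ) Nat.cast_injective).symm

theorem IsMagic.map_natCast_eq_lucasSquare (h : IsMagic M (3 * s)) :
    M.map ((↑) : ℕ → ℤ) = lucasSquare (s : ℤ) (M 0 0 - s) (M 0 2 - s) := by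
  have sums := (isMagic_iff_map_natCast.mp h).2
  rw [Nat.cast_mul, ← nsmul_eq_mul] at sums
  exact sums.eq_lucasSquare

theorem isMagic_iff_of_map_natCast_eq_lucasSquare {a b : ℤ}
    (h : M.map ((↑) : ℕ → ℤ) = lucasSquare (s : ℤ) a b) :
    IsMagic M (3 * s) ↔ (a, b) ∈ l1BallOffLines s coincidenceDirections := by
  have nonneg : |a| + |b| ≤ s := lucasSquare_nonneg_iff.mp fun i j ↦ by simp [← h]
  have sums : HasMagicSums (lucasSquare (s : ℤ) a b) (3 * s : ℕ) := by
    rw [Nat.cast_mul, ← nsmul_eq_mul]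
    exact hasMagicSums_lucasSquare (s : ℤ) a b
  have mem_ball : (a, b) ∈ l1Ball s := by
    rw [mem_l1Ball]
    exact_mod_cast (natCast_l1Norm (a, b)).trans_le nonneg
  rw [isMagic_iff_map_natCast, h, and_iff_left sums, lucasSquare_injective_iff, l1BallOffLines,
    mem_filter, and_iff_right mem_ball]
  simp only [smul_eq_mul]

theorem exists_map_natCast_eq_lucasSquare {a b : ℤ} (h : (a, b) ∈ l1Ball s) :
    ∃ M : Matrix (Fin 3) (Fin 3) ℕ, M.map ((↑) : ℕ → ℤ) = lucasSquare (s : ℤ) a b := by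
  have nonneg : ∀ i j, 0 ≤ lucasSquare (s : ℤ) a b i j := by
    rw [lucasSquare_nonneg_iff, ← natCast_l1Norm (a, b)]
    exact_mod_cast mem_l1Ball.mp h
  exact ⟨(lucasSquare (s : ℤ) a b).map Int.toNat, by ext i j; simp [nonneg i j]⟩

end IsMagic

theorem bijOn_corner_deviations (s : ℕ) :
    Set.BijOn (fun M : Matrix (Fin 3) (Fin 3) ℕ ↦ ((M 0 0 - s, M 0 2 - s) : ℤ × ℤ))
      {M | IsMagic M (3 * s)} (l1BallOffLines s coincidenceDirections) := by
  refine ⟨fun M hM ↦ ?_, fun M hM N hN hMN ↦ ?_, ?_⟩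
  · exact (isMagic_iff_of_map_natCast_eq_lucasSquare hM.map_natCast_eq_lucasSquare).mp hM
  · obtain ⟨ha, hb⟩ := Prod.ext_iff.mp hMN
    apply Matrix.map_injective (Nat.cast_injective (R := ℤ))
    dsimp only at ha hb ⊢
    rw [hM.map_natCast_eq_lucasSquare, hN.map_natCast_eq_lucasSquare, ha, hb]
  · rintro ⟨a, b⟩ hab
    obtain ⟨M, hM⟩ := exists_map_natCast_eq_lucasSquare (mem_filter.mp hab).1
    have corner (i j : Fin 3) : (M i j : ℤ) = lucasSquare (s : ℤ) a b i j := by simp [← hM]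
    refine ⟨M, (isMagic_iff_of_map_natCast_eq_lucasSquare hM).mpr hab, ?_⟩
    simp [corner, lucasSquare]

theorem ncard_isMagic_add (s : ℕ) :
    {M : Matrix (Fin 3) (Fin 3) ℕ | IsMagic M (3 * s)}.ncard +
      (4 * s + 4 * (s / 2) + 8 * (s / 3)) = 2 * s * (s + 1) := by
  rw [(bijOn_corner_deviations s).ncard_eq, Set.ncard_coe_finset,
    card_l1BallOffLines_coincidenceDirections]

/-- The number of magic squares of order 3 with magic number `3s` is
`2s² − (20/3)s + 1 − (−1)^s + (8/3)(s mod 3)`; stated with denominators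
cleared: three times the count equals
`6s² − 20s + 3 − 3·(−1)^s + 8·(s mod 3)`. -/
theorem count_magic_squares (s : ℕ) :
    (3 : ℤ) * {M : Matrix (Fin 3) (Fin 3) ℕ | IsMagic M (3 * s)}.ncard =
      6 * (s : ℤ) ^ 2 - 20 * (s : ℤ) + 3 - 3 * (-1) ^ s + 8 * ((s % 3 : ℕ) : ℤ) := by
  have count := congrArg (Nat.cast : ℕ → ℤ) (ncard_isMagic_add s)
  have half := four_mul_div_two s
  have third : 3 * ((s / 3 : ℕ) : ℤ) = s - (s % 3 : ℕ) := by omega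
  push_cast at count half third ⊢
  linear_combination 3 * count - 3 * half - 8 * third
end

section
/- If M = [[a₁,a₂,a₃],[b₁,b₂,b₃],[c₁,c₂,c₃]] is a reduced magic square of order 3, then the center entry satisfies b₂ ≥ 4. -/
open Matrix Finset

/-- A reduced magic square of order 3: a magic square one of whose entries
is 0, and with `c₃ < a₁`, `c₃ < a₃`, `c₃ < c₁`, `c₁ < a₃`. -/
def IsReducedMagic (M : Matrix (Fin 3) (Fin 3) ℕ) : Prop :=
  IsMagicSquare M ∧ (∃ i j, M i j = 0) ∧
  M 2 2 < M 0 0 ∧ M 2 2 < M 0 2 ∧ M 2 2 < M 2 0 ∧ M 2 0 < M 0 2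

/-!
Each of the four lines through the center meets the center and a pair of opposite entries. Together
they cover the whole square, with the center counted four times, so the magic number is three times
the center and opposite entries add up to twice the center. In particular the nine distinct entries
all lie in `{0, …, 2 * M 1 1}`.
-/

/-- All rows, all columns and both diagonals of the square `M` have sum `m`. Unlike in `IsMagic`,
the entries may repeat and may lie in any additive commutative monoid. -/
structure HasMagicSum {n : ℕ} {R : Type*} [AddCommMonoid R]
    (M : Matrix (Fin n) (Fin n) R) (m : R) : Prop where
  row : ∀ i, ∑ j, M i j = m
  col : ∀ j, ∑ i, M i j = m
  diag : ∑ i, M i i = m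
  antidiag : ∑ i, M i i.rev = m

namespace HasMagicSum

variable {R : Type*}

theorem add_center_add_rev [AddCommMonoid R] {M : Matrix (Fin 3) (Fin 3) R} {m : R}
    (h : HasMagicSum M m) {i j : Fin 3} (hij : (i, j) ≠ (1, 1)) :
    M i j + M 1 1 + M i.rev j.rev = m := by
  have row := h.row 1
  have col := h.col 1
  have diag := h.diag
  have antidiag := h.antidiag
  simp only [Fin.sum_univ_three, Fin.reduceRev] at row col diag antidiag
  have reverse (x y z : R) : x + y + z = z + y + x := by abel
  match i, j with
  | 1, 1 => exact absurd rfl hij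
  | 1, 0 => exact row
  | 1, 2 => exact (reverse _ _ _).trans row
  | 0, 1 => exact col
  | 2, 1 => exact (reverse _ _ _).trans col
  | 0, 0 => exact diag
  | 2, 2 => exact (reverse _ _ _).trans diag
  | 0, 2 => exact antidiag
  | 2, 0 => exact (reverse _ _ _).trans antidiag

variable [AddCancelCommMonoid R] {M : Matrix (Fin 3) (Fin 3) R} {m : R}

theorem eq_three_nsmul_center (h : HasMagicSum M m) : m = 3 • M 1 1 := by
  have total : ∑ i, ∑ j, M i j = 3 • m := by simp [h.row]
  have lines_through_center :
      (∑ j, M 1 j) + (∑ i, M i 1) + (∑ i, M i i) + (∑ i, M i i.rev) =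
        (∑ i, ∑ j, M i j) + 3 • M 1 1 := by
    simp only [Fin.sum_univ_three, Fin.reduceRev]
    abel
  rw [h.row, h.col, h.diag, h.antidiag, total] at lines_through_center
  apply add_left_cancel (a := 3 • m)
  rw [← lines_through_center]
  abel

theorem add_rev (h : HasMagicSum M m) (i j : Fin 3) :
    M i j + M i.rev j.rev = 2 • M 1 1 := by
  by_cases hij : (i, j) = (1, 1)
  · obtain ⟨rfl, rfl⟩ := Prod.mk.inj hij
    exact (two_nsmul _).symm
  · apply add_right_cancel (b := M 1 1)
    calc M i j + M i.rev j.rev + M 1 1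
        = M i j + M 1 1 + M i.rev j.rev := add_right_comm _ _ _
      _ = m := h.add_center_add_rev hij
      _ = 3 • M 1 1 := h.eq_three_nsmul_center
      _ = 2 • M 1 1 + M 1 1 := succ_nsmul _ _

theorem le_two_nsmul_center [LE R] [CanonicallyOrderedAdd R] (h : HasMagicSum M m)
    (i j : Fin 3) : M i j ≤ 2 • M 1 1 :=
  h.add_rev i j ▸ le_self_add

end HasMagicSum

theorem IsMagic.hasMagicSum {M : Matrix (Fin 3) (Fin 3) ℕ} {m : ℕ} (h : IsMagic M m) :
    HasMagicSum M m :=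
  ⟨h.2.1, h.2.2.1, h.2.2.2.1, h.2.2.2.2⟩

theorem reduced_center_ge_four_general (M : Matrix (Fin 3) (Fin 3) ℕ) (h : IsMagicSquare M) :
    4 ≤ M 1 1 := by
  obtain ⟨m, hM⟩ := h
  have entry_mem (p : Fin 3 × Fin 3) : M p.1 p.2 ∈ Iic (2 * M 1 1) :=
    mem_Iic.2 (hM.hasMagicSum.le_two_nsmul_center p.1 p.2)
  have card_le : #(univ : Finset (Fin 3 × Fin 3)) ≤ #(Iic (2 * M 1 1)) :=
    card_le_card_of_injOn _ (fun p _ => entry_mem p) hM.1.injOn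
  have nine_le : 9 ≤ 2 * M 1 1 + 1 := by simpa using card_le
  lia

/-- In a reduced magic square, the center entry is at least `4`. -/
theorem reduced_center_ge_four (M : Matrix (Fin 3) (Fin 3) ℕ)
    (h : IsReducedMagic M) : 4 ≤ M 1 1 :=
  reduced_center_ge_four_general M h.1
end

section
/- Let M be a magic square of order 3 all of whose entries are positive. Then there exists a transformation g in the dihedral group of order 8 (generated by rotation by 90 degrees and reflection, acting on the entries of a 3×3 matrix) and positive integers i, j, k such that g applied to M equals either i·A + j·B + k·C or i·A + j·B + k·D. -/
open Matrix Finset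

/-- Rotation by 90 degrees acting on 3×3 matrices. -/
def rot (M : Matrix (Fin 3) (Fin 3) ℕ) : Matrix (Fin 3) (Fin 3) ℕ :=
  Matrix.of fun i j => M j.rev i

/-- Reflection acting on 3×3 matrices. -/
def reflect (M : Matrix (Fin 3) (Fin 3) ℕ) : Matrix (Fin 3) (Fin 3) ℕ :=
  Matrix.of fun i j => M i j.rev

/-- The dihedral group of order 8 generated by `rot` and `reflect`, as a set of
transformations of 3×3 matrices. -/
def Dih8 : Set (Matrix (Fin 3) (Fin 3) ℕ → Matrix (Fin 3) (Fin 3) ℕ) :=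
  {g | ∃ n ≤ 3, g = rot^[n] ∨ g = rot^[n] ∘ reflect}

def A : Matrix (Fin 3) (Fin 3) ℕ := !![1,1,1; 1,1,1; 1,1,1]
def B : Matrix (Fin 3) (Fin 3) ℕ := !![5,0,4; 2,3,4; 2,6,1]
def C : Matrix (Fin 3) (Fin 3) ℕ := !![2,0,1; 0,1,2; 1,2,0]
def D : Matrix (Fin 3) (Fin 3) ℕ := !![3,0,3; 2,2,2; 1,4,1]
def T1 : Matrix (Fin 3) (Fin 3) ℕ := !![7,0,5; 2,4,6; 3,8,1]
def T2 : Matrix (Fin 3) (Fin 3) ℕ := !![8,0,7; 4,5,6; 3,10,2]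

/-!
In a square with equal line sums, entries symmetric about the centre add up to twice the central
entry `c`, so each diagonal of a magic square has exactly one corner exceeding `c`. These two
corners are adjacent; move them to the top row, the larger one to the left. The square is then

  `c + a`      `c - a - b`  `c + b`
  `c - a + b`  `c`          `c + a - b`
  `c - b`      `c + a + b`  `c - a`

with `0 < b < a`, and distinctness of `c + b` and `c + a - b` excludes `a = 2 * b`. If `2 * b < a`
it is `(c - a - b) • A + b • B + (a - 2 * b) • C`, otherwise it is
`(c - a - b) • A + (a - b) • B + (2 * b - a) • D`. The coefficient `c - a - b` is itself an entry of
the square, hence positive when all entries are.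
-/

variable {M N : Matrix (Fin 3) (Fin 3) ℕ} {m n : ℕ}

theorem rot_iterate_four : rot^[4] = id := by
  ext M i j
  simp [rot]

theorem reflect_rot : reflect (rot M) = rot^[3] (reflect M) := by
  ext i j
  simp [rot, reflect]

theorem rot_iterate_mod_four (n : ℕ) : rot^[n % 4] = rot^[n] :=
  funext fun M => Function.IsPeriodicPt.iterate_mod_apply (congrFun rot_iterate_four M) n

theorem rot_iterate_mem_dih8 (n : ℕ) : rot^[n] ∈ Dih8 :=
  ⟨n % 4, by omega, .inl (rot_iterate_mod_four n).symm⟩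

theorem rot_iterate_comp_reflect_mem_dih8 (n : ℕ) : rot^[n] ∘ reflect ∈ Dih8 :=
  ⟨n % 4, by omega, .inr (by rw [rot_iterate_mod_four])⟩

theorem reflect_comp_rot_iterate (n : ℕ) : reflect ∘ rot^[n] = rot^[3 * n] ∘ reflect := by
  have h : Function.Semiconj reflect rot rot^[3] := fun _ => reflect_rot
  rw [Function.iterate_mul]
  exact (h.iterate_right n).comp_eq

theorem reflect_comp_rot_iterate_mem_dih8 (n : ℕ) : reflect ∘ rot^[n] ∈ Dih8 :=
  reflect_comp_rot_iterate n ▸ rot_iterate_comp_reflect_mem_dih8 (3 * n)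

theorem dih8_induction {P : Matrix (Fin 3) (Fin 3) ℕ → Prop} (hrot : ∀ N, P N → P (rot N))
    (hreflect : ∀ N, P N → P (reflect N)) {g : Matrix (Fin 3) (Fin 3) ℕ → Matrix (Fin 3) (Fin 3) ℕ}
    (hg : g ∈ Dih8) (hM : P M) : P (g M) := by
  obtain ⟨n, -, rfl | rfl⟩ := hg
  · exact Function.Iterate.rec P hM hrot n
  · exact Function.Iterate.rec P (hreflect M hM) hrot n

/-- All rows, columns and both diagonals of `M` sum to `m`. This is `IsMagic M m` without the
distinctness of the entries, which makes it stable under addition and scalar multiplication. -/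
def HasLineSum (M : Matrix (Fin 3) (Fin 3) ℕ) (m : ℕ) : Prop :=
  (∀ i, ∑ j, M i j = m) ∧ (∀ j, ∑ i, M i j = m) ∧ (∑ i, M i i = m) ∧ (∑ i, M i i.rev = m)

theorem hasLineSum_A : HasLineSum A 3 := by
  unfold HasLineSum
  decide

theorem hasLineSum_B : HasLineSum B 9 := by
  unfold HasLineSum
  decide

theorem hasLineSum_C : HasLineSum C 3 := by
  unfold HasLineSum
  decide

theorem hasLineSum_D : HasLineSum D 6 := by
  unfold HasLineSum
  decide

theorem hasLineSum_rot (h : HasLineSum M m) : HasLineSum (rot M) m := by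
  obtain ⟨hrow, hcol, hdiag, hanti⟩ := h
  refine ⟨fun i => ?_, fun j => hrow j.rev, ?_, ?_⟩
  · exact (Equiv.sum_comp Fin.revPerm fun j => M j i).trans (hcol i)
  · rw [← hanti, ← Equiv.sum_comp Fin.revPerm]
    simp [rot]
  · simpa [rot] using hdiag

theorem hasLineSum_reflect (h : HasLineSum M m) : HasLineSum (reflect M) m := by
  obtain ⟨hrow, hcol, hdiag, hanti⟩ := h
  refine ⟨fun i => ?_, fun j => hcol j.rev, hanti, ?_⟩
  · exact (Equiv.sum_comp Fin.revPerm (M i)).trans (hrow i)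
  · simpa [reflect] using hdiag

namespace HasLineSum

theorem add (hM : HasLineSum M m) (hN : HasLineSum N n) : HasLineSum (M + N) (m + n) := by
  obtain ⟨hrow, hcol, hdiag, hanti⟩ := hM
  obtain ⟨hrow', hcol', hdiag', hanti'⟩ := hN
  simp [HasLineSum, sum_add_distrib, *]

theorem smul (k : ℕ) (h : HasLineSum M m) : HasLineSum (k • M) (k * m) := by
  obtain ⟨hrow, hcol, hdiag, hanti⟩ := h
  simp [HasLineSum, ← mul_sum, *]

theorem eq_three_mul_center (h : HasLineSum M m) : m = 3 * M 1 1 := by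
  obtain ⟨hrow, hcol, hdiag, hanti⟩ := h
  simp only [Fin.sum_univ_three, Fin.reduceRev] at hrow hcol hdiag hanti
  -- The four lines through the centre cover it four times and every other entry once.
  linarith [hrow 0, hrow 1, hrow 2, hcol 1]

theorem add_rev_rev (h : HasLineSum M m) (i j : Fin 3) :
    M i j + M i.rev j.rev = 2 * M 1 1 := by
  have hm := h.eq_three_mul_center
  obtain ⟨hrow, hcol, hdiag, hanti⟩ := h
  have hrow₁ := hrow 1
  have hcol₁ := hcol 1
  simp only [Fin.sum_univ_three, Fin.reduceRev] at hrow₁ hcol₁ hdiag hanti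
  fin_cases i <;> fin_cases j <;>
  simp only [Fin.zero_eta, Fin.mk_one, Fin.reduceFinMk, Fin.rev_zero, Fin.reduceLast,
    Fin.reduceRev] <;>
  omega

theorem top_row_eq_three_mul_center (h : HasLineSum M m) : M 0 0 + M 0 1 + M 0 2 = 3 * M 1 1 := by
  rw [← h.eq_three_mul_center, ← h.1 0, Fin.sum_univ_three]

theorem top_left_add_center_eq (h : HasLineSum M m) : M 0 0 + M 1 1 = M 0 2 + M 1 2 := by
  have hcol : M 0 2 + M 1 2 + M 2 2 = 3 * M 1 1 := by
    rw [← h.eq_three_mul_center, ← h.2.1 2, Fin.sum_univ_three]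
  have hdiag : M 0 0 + M 2 2 = 2 * M 1 1 := h.add_rev_rev 0 0
  omega

theorem ext_center_top_corners (hM : HasLineSum M m) (hN : HasLineSum N n)
    (hcenter : M 1 1 = N 1 1) (hleft : M 0 0 = N 0 0) (hright : M 0 2 = N 0 2) : M = N := by
  have htop : M 0 1 = N 0 1 := by
    have := hM.top_row_eq_three_mul_center
    have := hN.top_row_eq_three_mul_center
    omega
  have hmid : M 1 2 = N 1 2 := by
    have := hM.top_left_add_center_eq
    have := hN.top_left_add_center_eq
    omega
  have hsymm {i j : Fin 3} (h : M i j = N i j) : M i.rev j.rev = N i.rev j.rev := by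
    have := hM.add_rev_rev i j
    have := hN.add_rev_rev i j
    omega
  ext i j
  fin_cases i <;> fin_cases j
  exacts [hleft, htop, hright, hsymm hmid, hcenter, hmid, hsymm hright, hsymm htop, hsymm hleft]

theorem eq_smul_A_add_smul_B_add_smul_C {j k : ℕ} (h : HasLineSum M m) (hj : M 1 1 + j = M 0 2)
    (hk : M 0 2 + k = M 1 2) : M = M 0 1 • A + j • B + k • C := by
  have hrow := h.top_row_eq_three_mul_center
  have hleft := h.top_left_add_center_eq
  apply h.ext_center_top_corners
    (((hasLineSum_A.smul _).add (hasLineSum_B.smul j)).add (hasLineSum_C.smul k)) <;>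
  simp only [A, B, C, Matrix.add_apply, Matrix.smul_apply, of_apply, Matrix.cons_val,
    Matrix.cons_val', smul_eq_mul] <;>
  omega

theorem eq_smul_A_add_smul_B_add_smul_D {j k : ℕ} (h : HasLineSum M m) (hj : M 0 2 + j = M 0 0)
    (hk : M 1 2 + k = M 0 2) : M = M 0 1 • A + j • B + k • D := by
  have hrow := h.top_row_eq_three_mul_center
  have hleft := h.top_left_add_center_eq
  apply h.ext_center_top_corners
    (((hasLineSum_A.smul _).add (hasLineSum_B.smul j)).add (hasLineSum_D.smul k)) <;>
  simp only [A, B, D, Matrix.add_apply, Matrix.smul_apply, of_apply, Matrix.cons_val,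
    Matrix.cons_val', smul_eq_mul] <;>
  omega

theorem exists_rot_iterate_center_lt_top_corners (h : HasLineSum M m) (h00 : M 0 0 ≠ M 1 1)
    (h02 : M 0 2 ≠ M 1 1) :
    ∃ n, (rot^[n] M) 1 1 < (rot^[n] M) 0 0 ∧ (rot^[n] M) 1 1 < (rot^[n] M) 0 2 := by
  have hdiag : M 0 0 + M 2 2 = 2 * M 1 1 := h.add_rev_rev 0 0
  have hanti : M 0 2 + M 2 0 = 2 * M 1 1 := h.add_rev_rev 0 2
  rcases h00.lt_or_gt with hleft | hleft <;> rcases h02.lt_or_gt with hright | hright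
  · exact ⟨2, show M 1 1 < M 2 2 by omega, show M 1 1 < M 2 0 by omega⟩
  · exact ⟨3, hright, show M 1 1 < M 2 2 by omega⟩
  · exact ⟨1, show M 1 1 < M 2 0 by omega, hleft⟩
  · exact ⟨0, hleft, hright⟩

end HasLineSum

theorem isMagic_rot (h : IsMagic M m) : IsMagic (rot M) m := by
  refine ⟨h.1.comp (f := fun p : Fin 3 × Fin 3 => (p.2.rev, p.1)) ?_, hasLineSum_rot h.2⟩
  rintro ⟨i, j⟩ ⟨k, l⟩ hp
  simp_all

theorem isMagic_reflect (h : IsMagic M m) : IsMagic (reflect M) m := by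
  refine ⟨h.1.comp (f := fun p : Fin 3 × Fin 3 => (p.1, p.2.rev)) ?_, hasLineSum_reflect h.2⟩
  rintro ⟨i, j⟩ ⟨k, l⟩ hp
  simp_all

namespace IsMagic

theorem hasLineSum (h : IsMagic M m) : HasLineSum M m := h.2

theorem apply_ne {i j k l : Fin 3} (h : IsMagic M m) (hne : (i, j) ≠ (k, l)) : M i j ≠ M k l :=
  h.1.ne hne

theorem apply_of_mem_dih8 {g : Matrix (Fin 3) (Fin 3) ℕ → Matrix (Fin 3) (Fin 3) ℕ}
    (h : IsMagic M m) (hg : g ∈ Dih8) : IsMagic (g M) m :=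
  dih8_induction (P := fun N => IsMagic N m) (fun _ => isMagic_rot) (fun _ => isMagic_reflect) hg h

theorem exists_dih8_center_lt_top_right_lt_top_left (h : IsMagic M m) :
    ∃ g ∈ Dih8, g M 1 1 < g M 0 2 ∧ g M 0 2 < g M 0 0 := by
  obtain ⟨n, hleft, hright⟩ := h.hasLineSum.exists_rot_iterate_center_lt_top_corners
    (h.apply_ne (by decide)) (h.apply_ne (by decide))
  have hne : (rot^[n] M) 0 0 ≠ (rot^[n] M) 0 2 :=
    (h.apply_of_mem_dih8 (rot_iterate_mem_dih8 n)).apply_ne (by decide)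
  rcases hne.lt_or_gt with hlt | hgt
  · exact ⟨_, reflect_comp_rot_iterate_mem_dih8 n, hleft, hlt⟩
  · exact ⟨_, rot_iterate_mem_dih8 n, hright, hgt⟩

theorem exists_eq_of_center_lt_top_right_lt_top_left (h : IsMagic M m) (hright : M 1 1 < M 0 2)
    (hleft : M 0 2 < M 0 0) :
    ∃ j k : ℕ, 0 < j ∧ 0 < k ∧
      (M = M 0 1 • A + j • B + k • C ∨ M = M 0 1 • A + j • B + k • D) := by
  have hne : M 0 2 ≠ M 1 2 := h.apply_ne (by decide)
  rcases hne.lt_or_gt with hlt | hgt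
  · obtain ⟨j, hj, hjM⟩ := exists_pos_add_of_lt' hright
    obtain ⟨k, hk, hkM⟩ := exists_pos_add_of_lt' hlt
    exact ⟨j, k, hj, hk, .inl (h.hasLineSum.eq_smul_A_add_smul_B_add_smul_C hjM hkM)⟩
  · obtain ⟨j, hj, hjM⟩ := exists_pos_add_of_lt' hleft
    obtain ⟨k, hk, hkM⟩ := exists_pos_add_of_lt' hgt
    exact ⟨j, k, hj, hk, .inr (h.hasLineSum.eq_smul_A_add_smul_B_add_smul_D hjM hkM)⟩

end IsMagic

theorem pos_of_mem_dih8 {g : Matrix (Fin 3) (Fin 3) ℕ → Matrix (Fin 3) (Fin 3) ℕ} (hg : g ∈ Dih8)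
    (hpos : ∀ i j, 0 < M i j) (i j : Fin 3) : 0 < g M i j :=
  dih8_induction (P := fun N => ∀ i j, 0 < N i j) (fun _ h i j => h j.rev i)
    (fun _ h i j => h i j.rev) hg hpos i j

theorem positive_magic_square_of_two_types_general (hM : IsMagicSquare M) :
    ∃ g ∈ Dih8, ∃ j k : ℕ, 0 < j ∧ 0 < k ∧
      (g M = g M 0 1 • A + j • B + k • C ∨ g M = g M 0 1 • A + j • B + k • D) := by
  obtain ⟨m, h⟩ := hM
  obtain ⟨g, hg, hright, hleft⟩ := h.exists_dih8_center_lt_top_right_lt_top_left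
  exact ⟨g, hg, (h.apply_of_mem_dih8 hg).exists_eq_of_center_lt_top_right_lt_top_left hright hleft⟩

/-- Every magic square of order 3 with all entries positive, after applying a
suitable rotation or reflection, can be written as `i·A + j·B + k·C` or
`i·A + j·B + k·D` with `i, j, k` positive integers. -/
theorem positive_magic_square_of_two_types (M : Matrix (Fin 3) (Fin 3) ℕ)
    (hM : IsMagicSquare M) (hpos : ∀ i j, 0 < M i j) :
    ∃ g ∈ Dih8, ∃ i j k : ℕ, 0 < i ∧ 0 < j ∧ 0 < k ∧
      (g M = i • A + j • B + k • C ∨ g M = i • A + j • B + k • D) := by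
  obtain ⟨g, hg, j, k, hj, hk, h⟩ := positive_magic_square_of_two_types_general hM
  exact ⟨g, hg, g M 0 1, j, k, pos_of_mem_dih8 hg hpos 0 1, hj, hk, h⟩
end
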